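/- arXiv:1412.3531 — 2 statements merged into one kernel-verified Lean document; each statement's English description precedes it below -/
import Mathlib

section
/- Let n ≥ 4 and 1 ≤ k ≤ n/2 be integers, and let 3 = λ₁ > λ₂ ≥ … ≥ λ_{2n} be the eigenvalues (with multiplicity, in decreasing order) of the adjacency matrix of the generalised Petersen graph P(n,k). Then the spectral gap satisfies λ₁ − λ₂ < 4π/(⌊√n⌋ − 1). -/
/-!
Functions of the form `(p f, q f)`, with `f` the real part of an additive character of `ZMod n` of
frequency `j`, are mapped by the adjacency operator to functions of the same form, through the
matrix `!![2 cos (2πj/n), 1; 1, s cos (2πjk/n)]`. Here `s` is the degree of the graph induced on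
the inner vertices: `s = 2`, except that `s = 1` if `2 k = n`.

For `j = 0` a positive eigenvector `(p, q)` of `!![2, 1; 1, s]` with eigenvalue `μ` yields a
positive eigenvector of the graph, so `μ` is the largest eigenvalue (`eigenvalues_le_of_pos`).
For `j ≠ 0` the same pair `(p, q)` times the cosine of frequency `j` is orthogonal to that
eigenvector, and by the min-max principle (`two_le_card_eigenvalues`) the gap is at most
`(2 (1 - cos (2πj/n)) p² + s (1 - cos (2πjk/n)) q²) / (p² + q²)` (`gap_le`).

Put `M = ⌊√n⌋ - 1`, so that `M² < n`. If `s = 2`, then `p = q = 1`, and Dirichlet's pigeonhole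
argument (`exists_small_multiple`) gives a `j ≠ 0` with `j/n` and `jk/n` both at distance less than
`1/M` from an integer. Since `1 - cos x ≤ |x|`, the gap is less than `2π/M + 2π/M`. If `s = 1`,
then `p/q` is the golden ratio, and `j = 2` makes the second cosine equal to `1`, so the gap is at
most `8π/n < 4π/M`.
-/

open scoped Classical

/-- The generalised Petersen graph `P(n,k)` on vertex set `ZMod n × Bool`:
`(i, false)` is the outer vertex `a i`, `(i, true)` is the inner vertex `b i`;
edges are `a i a (i+1)`, `a i b i` and `b i b (i+k)` (indices mod `n`). -/
def petersen (n k : ℕ) : SimpleGraph (ZMod n × Bool) :=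
  SimpleGraph.fromRel fun v w =>
    (v.2 = false ∧ w.2 = false ∧ w.1 = v.1 + 1) ∨
    (v.2 = false ∧ w.2 = true ∧ w.1 = v.1) ∨
    (v.2 = true ∧ w.2 = true ∧ w.1 = v.1 + (k : ZMod n))

/-- The adjacency matrix (over `ℝ`) of the generalised Petersen graph `P(n,k)`. -/
noncomputable def petersenAdj (n k : ℕ) : Matrix (ZMod n × Bool) (ZMod n × Bool) ℝ :=
  SimpleGraph.adjMatrix ℝ (petersen n k)

/-! ### Cosines on `ZMod n` -/

/-- The function `i ↦ cos (2π j i / n)` on `ZMod n`, encoded as the real part of the standard additive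
character at `j * i`. -/
noncomputable def cosChar (n : ℕ) [NeZero n] (j i : ZMod n) : ℝ :=
  (ZMod.stdAddChar (j * i)).re

lemma cosChar_zero (n : ℕ) [NeZero n] (j : ZMod n) : cosChar n j 0 = 1 := by
  simp [cosChar]

lemma cosChar_add_sub (n : ℕ) [NeZero n] (j i d : ZMod n) :
    cosChar n j (i + d) + cosChar n j (i - d) = 2 * cosChar n j d * cosChar n j i := by
  have h : ZMod.stdAddChar (-(j * d)) = (starRingEnd ℂ) (ZMod.stdAddChar (j * d)) :=
    AddChar.map_neg_eq_conj _ _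
  simp only [cosChar, mul_add, sub_eq_add_neg, mul_neg, AddChar.map_add_eq_mul, h, Complex.mul_re,
    Complex.conj_re, Complex.conj_im]
  ring

lemma cosChar_eq_cos (n : ℕ) [NeZero n] (j i : ZMod n) (t : ℤ) (h : (t : ZMod n) = j * i) :
    cosChar n j i = Real.cos (2 * Real.pi * t / n) := by
  rw [cosChar, ← h, ZMod.stdAddChar_coe]
  have : (2 * Real.pi * Complex.I * t / n : ℂ)
      = ((2 * Real.pi * t / n : ℝ) : ℂ) * Complex.I := by
    push_cast; ring
  rw [this, Complex.exp_ofReal_mul_I_re]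

lemma sum_cosChar (n : ℕ) [NeZero n] (j : ZMod n) (hj : j ≠ 0) :
    ∑ i, cosChar n j i = 0 := by
  have h : ∑ i, (ZMod.stdAddChar (j * i) : ℂ) = 0 :=
    AddChar.sum_eq_zero_of_ne_one (ψ := AddChar.mulShift ZMod.stdAddChar j)
      (ZMod.isPrimitive_stdAddChar n hj)
  have := congrArg Complex.re h
  simpa [cosChar] using this

lemma one_sub_cos_le_abs (x : ℝ) : 1 - Real.cos x ≤ |x| := by
  rcases le_total |x| 2 with h | h
  · have := Real.one_sub_sq_div_two_le_cos (x := x)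
    have h2 := sq_abs x
    nlinarith [abs_nonneg x]
  · linarith [Real.neg_one_le_cos x]

/-- Dirichlet's simultaneous approximation of `x / n` and `x k / n`, by the pigeonhole principle on
an `M × M` grid of boxes. -/
lemma exists_small_multiple (n : ℕ) [NeZero n] (k : ZMod n) (M : ℕ) (hpos : 0 < M)
    (hM : M * M < n) :
    ∃ (j : ZMod n) (t u : ℤ), j ≠ 0 ∧ (t : ZMod n) = j ∧ (u : ZMod n) = j * k ∧
      |t| * M < n ∧ |u| * M < n := by
  have hn : 0 < n := NeZero.pos n
  have hmem : ∀ x : ZMod n, x.val * M / n < M := by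
    intro x
    rw [Nat.div_lt_iff_lt_mul hn, mul_comm M]
    exact Nat.mul_lt_mul_of_pos_right (ZMod.val_lt x) hpos
  have hmaps : ∀ x ∈ (Finset.univ : Finset (ZMod n)),
      (x.val * M / n, (x * k).val * M / n) ∈ Finset.range M ×ˢ Finset.range M := by
    intro x _
    have h1 := hmem x
    have h2 := hmem (x * k)
    simp [h1, h2]
  obtain ⟨x, -, y, -, hxy, he⟩ := Finset.exists_ne_map_eq_of_card_lt_of_maps_to
    (by simpa [ZMod.card] using hM) hmaps
  have key : ∀ p q : ℕ, p * M / n = q * M / n → |(p : ℤ) - q| * M < n := by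
    intro p q h
    have hp := Nat.div_add_mod (p * M) n
    have hq := Nat.div_add_mod (q * M) n
    have hp' := Nat.mod_lt (p * M) hn
    have hq' := Nat.mod_lt (q * M) hn
    rw [h] at hp
    have hM' : (M : ℤ) = |(M : ℤ)| := by simp
    rw [hM', ← abs_mul, abs_lt]
    zify at hp hq hp' hq'
    have := Int.emod_nonneg ((p : ℤ) * M) (b := n) (by omega)
    have := Int.emod_nonneg ((q : ℤ) * M) (b := n) (by omega)
    constructor <;> linarith
  rw [Prod.mk.injEq] at he
  refine ⟨x - y, x.val - y.val, (x * k).val - (y * k).val, sub_ne_zero.mpr hxy, ?_, ?_,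
    key _ _ he.1, key _ _ he.2⟩
  · simp
  · simp [sub_mul]

/-! ### Eigenvalues of symmetric matrices -/

/-- Two-dimensional case of the Courant–Fischer principle: if `u` is an eigenvector for an
eigenvalue at least `c`, and `g ⊥ u` is nonzero with Rayleigh quotient at least `c`, then at least
two eigenvalues, counted with multiplicity, are at least `c`. -/
lemma two_le_card_eigenvalues {ι : Type*} [Fintype ι] {A : Matrix ι ι ℝ}
    (hA : A.IsHermitian) (c μ : ℝ) (hc : c ≤ μ) (u g : ι → ℝ) (hu : u ≠ 0) (hg : g ≠ 0)
    (hAu : A.mulVec u = μ • u) (hug : u ⬝ᵥ g = 0)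
    (hray : c * (g ⬝ᵥ g) ≤ g ⬝ᵥ A.mulVec g) :
    2 ≤ (Finset.univ.filter fun i => c ≤ hA.eigenvalues i).card := by
  by_contra hlt
  have hle : (Finset.univ.filter fun i => c ≤ hA.eigenvalues i).card ≤ 1 := by omega
  -- coordinates in the eigenbasis
  let e : ι → ι → ℝ := fun i => (hA.eigenvectorBasis i : ι → ℝ)
  have hAT : A.transpose = A := by simpa using hA.eq
  have hcoord : ∀ (h : ι → ℝ) i, e i ⬝ᵥ A.mulVec h = hA.eigenvalues i * (e i ⬝ᵥ h) := by
    intro h i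
    rw [Matrix.dotProduct_mulVec, ← Matrix.mulVec_transpose, hAT]
    have := hA.mulVec_eigenvectorBasis i
    change A.mulVec (e i) = hA.eigenvalues i • e i at this
    rw [this, smul_dotProduct, smul_eq_mul]
  have hpars : ∀ h h' : ι → ℝ, h ⬝ᵥ h' = ∑ i, (e i ⬝ᵥ h) * (e i ⬝ᵥ h') := by
    intro h h'
    have := hA.eigenvectorBasis.sum_inner_mul_inner (WithLp.toLp 2 h) (WithLp.toLp 2 h')
    simp only [EuclideanSpace.inner_eq_star_dotProduct] at this
    rw [dotProduct_comm]
    simp only [star_trivial] at this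
    rw [← this]
    refine Finset.sum_congr rfl fun i _ => ?_
    rw [dotProduct_comm (e i) h']
  -- a nonzero vector of the plane on which the only large eigenvalue is not seen
  obtain ⟨α, β, hαβ, horth⟩ : ∃ α β : ℝ, (α ≠ 0 ∨ β ≠ 0) ∧
      ∀ i, c ≤ hA.eigenvalues i → e i ⬝ᵥ (α • u + β • g) = 0 := by
    by_cases hex : ∃ i, c ≤ hA.eigenvalues i
    · obtain ⟨i, hi⟩ := hex
      have huniq : ∀ i', c ≤ hA.eigenvalues i' → i' = i := fun i' hi' =>
        Finset.card_le_one.mp hle i' (by simp [hi']) i (by simp [hi])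
      by_cases h0 : e i ⬝ᵥ u = 0
      · refine ⟨1, 0, Or.inl one_ne_zero, fun i' hi' => ?_⟩
        rw [huniq i' hi']; simp [h0]
      · refine ⟨e i ⬝ᵥ g, -(e i ⬝ᵥ u), Or.inr (neg_ne_zero.mpr h0), fun i' hi' => ?_⟩
        rw [huniq i' hi', dotProduct_add, dotProduct_smul, dotProduct_smul]
        simp only [smul_eq_mul]; ring
    · exact ⟨1, 0, Or.inl one_ne_zero, fun i hi => absurd ⟨i, hi⟩ hex⟩
  set h := α • u + β • g with hh
  have hgu : g ⬝ᵥ u = 0 := by rw [dotProduct_comm]; exact hug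
  have huAg : u ⬝ᵥ A.mulVec g = 0 := by
    rw [Matrix.dotProduct_mulVec, ← Matrix.mulVec_transpose, hAT, hAu, smul_dotProduct, hug,
      smul_zero]
  have hupos : 0 < u ⬝ᵥ u :=
    lt_of_le_of_ne (Finset.sum_nonneg fun _ _ => mul_self_nonneg _) fun h => hu (dotProduct_self_eq_zero.mp h.symm)
  have hgpos : 0 < g ⬝ᵥ g :=
    lt_of_le_of_ne (Finset.sum_nonneg fun _ _ => mul_self_nonneg _) fun h => hg (dotProduct_self_eq_zero.mp h.symm)
  have hnorm : h ⬝ᵥ h = α ^ 2 * (u ⬝ᵥ u) + β ^ 2 * (g ⬝ᵥ g) := by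
    simp only [hh, dotProduct_add, add_dotProduct, dotProduct_smul, smul_dotProduct, hug, hgu,
      smul_eq_mul]
    ring
  have hquad : h ⬝ᵥ A.mulVec h = α ^ 2 * μ * (u ⬝ᵥ u) + β ^ 2 * (g ⬝ᵥ A.mulVec g) := by
    simp only [hh, Matrix.mulVec_add, Matrix.mulVec_smul, hAu, dotProduct_add, add_dotProduct,
      dotProduct_smul, smul_dotProduct, huAg, hgu, smul_eq_mul]
    ring
  have hpos : 0 < h ⬝ᵥ h := by
    rw [hnorm]
    rcases hαβ with h0 | h0 <;> positivity
  have hge : c * (h ⬝ᵥ h) ≤ h ⬝ᵥ A.mulVec h := by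
    rw [hnorm, hquad]
    have h1 := mul_le_mul_of_nonneg_left hray (sq_nonneg β)
    have h2 := mul_le_mul_of_nonneg_right hc (mul_nonneg (sq_nonneg α) hupos.le)
    nlinarith
  have hterm : ∀ i, (e i ⬝ᵥ h) * (e i ⬝ᵥ A.mulVec h) ≤ c * ((e i ⬝ᵥ h) * (e i ⬝ᵥ h)) := by
    intro i
    rw [hcoord]
    by_cases hi : c ≤ hA.eigenvalues i
    · simp [horth i hi]
    · nlinarith [mul_self_nonneg (e i ⬝ᵥ h)]
  obtain ⟨i, hi⟩ : ∃ i, e i ⬝ᵥ h ≠ 0 := by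
    by_contra! hall
    rw [hpars] at hpos
    simp [hall] at hpos
  have hlt : h ⬝ᵥ A.mulVec h < c * (h ⬝ᵥ h) := by
    rw [hpars h (A.mulVec h), hpars h h, Finset.mul_sum]
    refine Finset.sum_lt_sum (fun i _ => hterm i) ⟨i, Finset.mem_univ i, ?_⟩
    have hci : ¬ c ≤ hA.eigenvalues i := fun hci => hi (horth i hci)
    rw [hcoord]
    nlinarith [mul_self_pos.mpr hi]
  exact absurd hlt (not_lt.mpr hge)

/-- Perron–Frobenius bound: a positive eigenvector of a nonnegative matrix belongs to its largest
eigenvalue. -/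
lemma eigenvalues_le_of_pos {ι : Type*} [Fintype ι] {A : Matrix ι ι ℝ} (hA : A.IsHermitian)
    (hnn : ∀ i j, 0 ≤ A i j) (μ : ℝ) (u : ι → ℝ) (hu : ∀ i, 0 < u i)
    (hAu : A.mulVec u = μ • u) (i : ι) : hA.eigenvalues i ≤ μ := by
  let w : ι → ℝ := (hA.eigenvectorBasis i : ι → ℝ)
  have hw : A.mulVec w = hA.eigenvalues i • w := hA.mulVec_eigenvectorBasis i
  have hw0 : ∃ y, w y ≠ 0 := by
    by_contra! h
    apply hA.eigenvectorBasis.orthonormal.ne_zero i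
    ext y
    exact h y
  obtain ⟨y, hy⟩ := hw0
  -- the ratio `|w| / u` is compared with its maximum, attained at `x`
  obtain ⟨x, -, hx⟩ := Finset.exists_max_image Finset.univ (fun z => |w z| / u z) ⟨y, by simp⟩
  have hxpos : 0 < |w x| / u x :=
    lt_of_lt_of_le (div_pos (abs_pos.mpr hy) (hu y)) (hx y (Finset.mem_univ y))
  set r := |w x| / u x with hr
  have hbound : ∀ z, |w z| ≤ r * u z := fun z =>
    (div_le_iff₀ (hu z)).mp (hx z (Finset.mem_univ z))
  have hwx : |w x| = r * u x := by rw [hr, div_mul_cancel₀ _ (hu x).ne']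
  have h1 : hA.eigenvalues i * |w x| ≤ μ * |w x| := by
    calc hA.eigenvalues i * |w x| ≤ |hA.eigenvalues i * w x| := by
          rw [abs_mul]; exact mul_le_mul_of_nonneg_right (le_abs_self _) (abs_nonneg _)
      _ = |∑ z, A x z * w z| := by
          have := congrFun hw x
          simp only [Pi.smul_apply, smul_eq_mul] at this
          rw [← this]; rfl
      _ ≤ ∑ z, |A x z * w z| := Finset.abs_sum_le_sum_abs _ _
      _ ≤ ∑ z, r * (A x z * u z) := by
          refine Finset.sum_le_sum fun z _ => ?_
          rw [abs_mul, abs_of_nonneg (hnn x z)]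
          nlinarith [mul_le_mul_of_nonneg_left (hbound z) (hnn x z)]
      _ = r * (μ * u x) := by
          rw [← Finset.mul_sum]
          have := congrFun hAu x
          simp only [Pi.smul_apply, smul_eq_mul] at this
          rw [← this]; rfl
      _ = μ * |w x| := by rw [hwx]; ring
  exact le_of_mul_le_mul_right h1 (by rw [hwx]; exact mul_pos hxpos (hu x))

/-- An antitone enumeration of a finite family of reals has its first term bounded by any upper
bound of the family, and its second term at least `c` if two members of the family are. -/
lemma antitone_enum_bounds {ι : Type*} [Fintype ι] (N : ℕ) (h0 : 0 < N) (h1 : 1 < N)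
    (lam : Fin N → ℝ) (hmono : Antitone lam) (f : ι → ℝ)
    (hcount : ∀ x : ℝ, (Finset.univ.filter fun i : Fin N => lam i = x).card =
      (Finset.univ.filter fun v : ι => f v = x).card) (c μ : ℝ)
    (hμ : ∀ v, f v ≤ μ) (hc : 2 ≤ (Finset.univ.filter fun v => c ≤ f v).card) :
    lam ⟨0, h0⟩ ≤ μ ∧ c ≤ lam ⟨1, h1⟩ := by
  have hms : (Finset.univ : Finset (Fin N)).val.map lam
      = (Finset.univ : Finset ι).val.map f := by
    ext x
    have := hcount x
    simp only [Multiset.count_map, Finset.card_def, Finset.filter_val] at this ⊢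
    simpa only [eq_comm] using this
  constructor
  · have : lam ⟨0, h0⟩ ∈ (Finset.univ : Finset ι).val.map f := by
      rw [← hms]; exact Multiset.mem_map_of_mem _ (Finset.mem_univ_val _)
    obtain ⟨v, -, hv⟩ := Multiset.mem_map.mp this
    rw [← hv]; exact hμ v
  · by_contra! hlt
    have hcard : (Finset.univ.filter fun i => c ≤ lam i).card
        = (Finset.univ.filter fun v => c ≤ f v).card := by
      have := congrArg (Multiset.countP (c ≤ ·)) hms
      simpa only [Multiset.countP_map, Finset.card_def, Finset.filter_val] using this
    have hsub : (Finset.univ.filter fun i => c ≤ lam i) ⊆ {⟨0, h0⟩} := by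
      intro i hi
      simp only [Finset.mem_filter, Finset.mem_univ, true_and] at hi
      by_contra hne
      have : (⟨1, h1⟩ : Fin N) ≤ i := by
        rw [Fin.le_def]
        have : i.val ≠ 0 := fun h => hne (by simp [Fin.ext_iff, h])
        simp; omega
      linarith [hmono this]
    have := Finset.card_le_card hsub
    simp at this
    omega

/-! ### The adjacency operator of `P(n,k)` -/

/-- The adjacency operator on outer vertices. -/
lemma petersenAdj_mulVec_outer (n k : ℕ) [NeZero n] (hn : 4 ≤ n) (w : ZMod n × Bool → ℝ)
    (i : ZMod n) : (petersenAdj n k).mulVec w (i, false)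
      = w (i + 1, false) + w (i - 1, false) + w (i, true) := by
  have h1 : (1 : ZMod n) ≠ 0 := by
    have := (ZMod.natCast_eq_zero_iff 1 n).not.mpr (fun h => by have := Nat.le_of_dvd one_pos h; omega)
    simpa using this
  have h2 : (2 : ZMod n) ≠ 0 := by
    have := (ZMod.natCast_eq_zero_iff 2 n).not.mpr (fun h => by have := Nat.le_of_dvd two_pos h; omega)
    simpa using this
  have hN : (petersen n k).neighborFinset (i, false)
      = {(i + 1, false), (i - 1, false), (i, true)} := by
    ext ⟨j, b⟩
    rw [SimpleGraph.mem_neighborFinset, petersen, SimpleGraph.fromRel_adj]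
    cases b
    · simp only [ne_eq, Prod.mk.injEq, Finset.mem_insert, Finset.mem_singleton, eq_sub_iff_add_eq,
        eq_comm (a := i)]
      simp
      rintro (rfl | rfl) <;> simpa using h1
    · simp
  have hne : i + 1 ≠ i - 1 := fun h => h2 (by linear_combination h)
  rw [petersenAdj, SimpleGraph.adjMatrix_mulVec_apply, hN, Finset.sum_insert (by simp [hne]),
    Finset.sum_insert (by simp), Finset.sum_singleton]
  ring

/-- The adjacency operator on inner vertices. The two inner neighbours `i ± k` coincide exactly when
`2 k = n`; the weight of the pair sum is then halved. -/
lemma petersenAdj_mulVec_inner (n k : ℕ) [NeZero n] (hk1 : 1 ≤ k) (hk2 : 2 * k ≤ n)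
    (w : ZMod n × Bool → ℝ) (i : ZMod n) : (petersenAdj n k).mulVec w (i, true)
      = w (i, false) + (if 2 * k = n then 1 else 2) / 2 *
        (w (i + k, true) + w (i - k, true)) := by
  have h1 : (k : ZMod n) ≠ 0 :=
    (ZMod.natCast_eq_zero_iff k n).not.mpr (fun h => by have := Nat.le_of_dvd hk1 h; omega)
  have hN : (petersen n k).neighborFinset (i, true)
      = {(i, false), (i + k, true), (i - k, true)} := by
    ext ⟨j, b⟩
    rw [SimpleGraph.mem_neighborFinset, petersen, SimpleGraph.fromRel_adj]
    cases b
    · simp [eq_comm]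
    · simp only [ne_eq, Prod.mk.injEq, Finset.mem_insert, Finset.mem_singleton, eq_sub_iff_add_eq,
        eq_comm (a := i)]
      simp
      rintro (rfl | rfl) <;> simpa using h1
  have h2 : ((2 * k : ℕ) : ZMod n) = 2 * k := by push_cast; ring
  rw [petersenAdj, SimpleGraph.adjMatrix_mulVec_apply, hN, Finset.sum_insert (by simp)]
  split_ifs with hkn
  · have : i - (k : ZMod n) = i + k := by
      have h3 : ((2 * k : ℕ) : ZMod n) = 0 := by rw [hkn]; simp
      rw [h2] at h3
      linear_combination -h3
    rw [this]
    simp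
    ring
  · have hne : i + (k : ZMod n) ≠ i - k := by
      have h3 : ((2 * k : ℕ) : ZMod n) ≠ 0 :=
        (ZMod.natCast_eq_zero_iff _ n).not.mpr
          (fun h => by have := Nat.le_of_dvd (by omega) h; omega)
      rw [h2] at h3
      exact fun h => h3 (by linear_combination h)
    rw [Finset.sum_pair (by simp [hne])]
    ring

/-- The vector equal to `p f` on the outer and `q f` on the inner vertices. -/
def blockVec {n : ℕ} (p q : ℝ) (f : ZMod n → ℝ) : ZMod n × Bool → ℝ :=
  fun v => if v.2 = true then q * f v.1 else p * f v.1

lemma blockVec_dotProduct {n : ℕ} [NeZero n] (p q p' q' : ℝ) (f f' : ZMod n → ℝ) :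
    blockVec p q f ⬝ᵥ blockVec p' q' f' = (p * p' + q * q') * ∑ i, f i * f' i := by
  simp only [dotProduct, blockVec, Fintype.sum_prod_type, Fintype.sum_bool, if_true,
    Bool.false_eq_true, if_false, Finset.mul_sum]
  exact Finset.sum_congr rfl fun i _ => by ring

lemma petersenAdj_mulVec_blockVec (n k : ℕ) [NeZero n] (hn : 4 ≤ n) (hk1 : 1 ≤ k)
    (hk2 : 2 * k ≤ n) (j : ZMod n) (p q : ℝ) :
    (petersenAdj n k).mulVec (blockVec p q (cosChar n j)) =
      blockVec (2 * cosChar n j 1 * p + q)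
        (p + (if 2 * k = n then 1 else 2) * cosChar n j k * q) (cosChar n j) := by
  ext ⟨i, b⟩
  have h1 := cosChar_add_sub n j i 1
  have h2 := cosChar_add_sub n j i k
  cases b
  · rw [petersenAdj_mulVec_outer n k hn]
    simp only [blockVec, if_true, Bool.false_eq_true, if_false]
    linear_combination p * h1
  · rw [petersenAdj_mulVec_inner n k hk1 hk2]
    simp only [blockVec, if_true, Bool.false_eq_true, if_false]
    linear_combination (if 2 * k = n then 1 else 2) / 2 * q * h2

/-! ### The spectral gap -/

/-- Upper bound for the gap from a nonzero frequency `j`. The pair `(p, q)` is a positive eigenvector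
of the `2 × 2` quotient matrix `!![2, 1; 1, s]`, where `s` is the inner degree; the test vector for
the second eigenvalue is `(p, q)` multiplied by the cosine of frequency `j`. -/
lemma gap_le (n k : ℕ) [NeZero n] (hn : 4 ≤ n) (hk1 : 1 ≤ k) (hk2 : 2 * k ≤ n)
    (h0 : 0 < 2 * n) (h1 : 1 < 2 * n) (hH : (petersenAdj n k).IsHermitian)
    (lam : Fin (2 * n) → ℝ) (hmono : Antitone lam)
    (hcount : ∀ x : ℝ, (Finset.univ.filter fun i : Fin (2 * n) => lam i = x).card =
      (Finset.univ.filter fun v : ZMod n × Bool => hH.eigenvalues v = x).card)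
    (j : ZMod n) (hj : j ≠ 0) (p q μ s d : ℝ) (hs : s = if 2 * k = n then 1 else 2)
    (hp : 0 < p) (hq : 0 < q) (hpμ : 2 * p + q = μ * p) (hqμ : p + s * q = μ * q) (hd : 0 ≤ d)
    (hbound : 2 * (1 - cosChar n j 1) * p ^ 2 + s * (1 - cosChar n j k) * q ^ 2
      ≤ d * (p ^ 2 + q ^ 2)) :
    lam ⟨0, h0⟩ - lam ⟨1, h1⟩ ≤ d := by
  have hone : cosChar n 0 = fun _ => (1 : ℝ) := by
    ext i; simp [cosChar]
  have hAu := petersenAdj_mulVec_blockVec n k hn hk1 hk2 0 p q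
  rw [← hs, hone] at hAu
  have hAu' : (petersenAdj n k).mulVec (blockVec p q fun _ => 1)
      = μ • blockVec p q fun _ => 1 := by
    rw [hAu]
    ext ⟨i, b⟩
    cases b <;> simp [blockVec] <;> linarith
  have hupos : ∀ v, 0 < blockVec p q (fun _ : ZMod n => 1) v := by
    rintro ⟨i, b⟩
    cases b <;> simpa [blockVec]
  have hf2 : 0 ≤ ∑ i, cosChar n j i * cosChar n j i :=
    Finset.sum_nonneg fun i _ => mul_self_nonneg _
  have h2 := two_le_card_eigenvalues hH (μ - d) μ (by linarith) (blockVec p q fun _ => 1)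
    (blockVec p q (cosChar n j))
    (fun h => (hupos (0, false)).ne' (congrFun h (0, false)))
    (fun h => by
      have := congrFun h (0, false)
      simp [blockVec, cosChar_zero] at this
      exact hp.ne' this)
    hAu' (by simp [blockVec_dotProduct, sum_cosChar n j hj])
    (by
      rw [petersenAdj_mulVec_blockVec n k hn hk1 hk2, ← hs, blockVec_dotProduct,
        blockVec_dotProduct, ← mul_assoc]
      refine mul_le_mul_of_nonneg_right ?_ hf2
      have e1 : p * (2 * p + q) = p * (μ * p) := by rw [hpμ]
      have e2 : q * (p + s * q) = q * (μ * q) := by rw [hqμ]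
      nlinarith)
  have hnn : ∀ x y, 0 ≤ petersenAdj n k x y := by
    intro x y
    rw [petersenAdj, SimpleGraph.adjMatrix_apply]
    split_ifs <;> norm_num
  have := antitone_enum_bounds (2 * n) h0 h1 lam hmono _ hcount (μ - d) μ
    (eigenvalues_le_of_pos hH hnn μ _ hupos hAu') h2
  linarith [this.1, this.2]

/-- The spectral gap of `P(n,k)`: if `lam : Fin (2n) → ℝ` enumerates the
eigenvalues (with multiplicity) of the adjacency matrix of `P(n,k)` in
decreasing order, then `lam 0 - lam 1 < 4π / (⌊√n⌋ - 1)`. -/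
theorem petersen_spectral_gap (n k : ℕ) [NeZero n] (hn : 4 ≤ n) (hk1 : 1 ≤ k)
    (hk2 : 2 * k ≤ n)
    (hH : (petersenAdj n k).IsHermitian)
    (lam : Fin (2 * n) → ℝ) (hmono : Antitone lam)
    (hcount : ∀ x : ℝ, (Finset.univ.filter fun i : Fin (2 * n) => lam i = x).card =
      (Finset.univ.filter fun v : ZMod n × Bool => hH.eigenvalues v = x).card) :
    lam ⟨0, by omega⟩ - lam ⟨1, by omega⟩ < 4 * Real.pi / ((Nat.sqrt n : ℝ) - 1) := by
  have hm2 : 2 ≤ Nat.sqrt n := Nat.le_sqrt.mpr (by omega)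
  have hmn : Nat.sqrt n * Nat.sqrt n ≤ n := Nat.sqrt_le n
  obtain ⟨M, hM⟩ : ∃ M, Nat.sqrt n = M + 1 := ⟨Nat.sqrt n - 1, by omega⟩
  rw [hM] at hm2 hmn ⊢
  have hMpos : 0 < M := by omega
  have hMM : M * M < n := by nlinarith
  have h2M : 2 * M < n := by nlinarith
  have hπ := Real.pi_pos
  have hn0 : (0 : ℝ) < n := by exact_mod_cast (by omega : 0 < n)
  have hM0 : (0 : ℝ) < M := by exact_mod_cast hMpos
  have hcast : ((M + 1 : ℕ) : ℝ) - 1 = M := by push_cast; ring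
  rw [hcast]
  have h2M' : 2 * (M : ℝ) < n := by exact_mod_cast h2M
  by_cases hkn : 2 * k = n
  -- Frequency `2` is constant along the inner edges if these join `i` to `i + n / 2`.
  · have hj : (2 : ZMod n) ≠ 0 := by
      have := (ZMod.natCast_eq_zero_iff 2 n).not.mpr
        (fun h => by have := Nat.le_of_dvd two_pos h; omega)
      simpa using this
    have hck : cosChar n 2 k = 1 := by
      have h0 : ((0 : ℤ) : ZMod n) = 2 * k := by
        have h3 : ((2 * k : ℕ) : ZMod n) = 0 := by rw [hkn]; simp
        push_cast at h3 ⊢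
        exact h3.symm
      rw [cosChar_eq_cos n 2 k 0 h0]
      simp
    have hc1 : 1 - cosChar n 2 1 ≤ 4 * Real.pi / n := by
      rw [cosChar_eq_cos n 2 1 2 (by simp)]
      refine (one_sub_cos_le_abs _).trans (le_of_eq ?_)
      rw [abs_of_nonneg (by positivity)]
      push_cast; ring
    have hφ := Real.goldenRatio_sq
    have hφ0 := Real.goldenRatio_pos
    have hd : 0 ≤ 4 * Real.pi / n := by positivity
    have := gap_le n k hn hk1 hk2 (by omega) (by omega) hH lam hmono hcount 2 hj Real.goldenRatio 1
      (Real.goldenRatio + 1) 1 (2 * (4 * Real.pi / n)) (by simp [hkn]) hφ0 one_pos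
      (by nlinarith) (by ring) (by positivity)
      (by
        rw [hck]
        nlinarith [mul_le_mul_of_nonneg_right hc1 (sq_nonneg Real.goldenRatio)])
    refine this.trans_lt ?_
    rw [← mul_div_assoc, div_lt_div_iff₀ hn0 hM0]
    nlinarith
  · obtain ⟨j, t, u, hj, ht, hu, htM, huM⟩ := exists_small_multiple n (k : ZMod n) M hMpos hMM
    have key : ∀ t : ℤ, |t| * M < n →
        1 - Real.cos (2 * Real.pi * t / n) < 2 * Real.pi / M := by
      intro t ht
      have ht' : |(t : ℝ)| * M < n := by exact_mod_cast ht
      refine (one_sub_cos_le_abs _).trans_lt ?_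
      rw [abs_div, abs_mul, abs_of_pos hn0, abs_of_pos (by positivity : 0 < 2 * Real.pi),
        div_lt_div_iff₀ hn0 hM0]
      nlinarith
    have h1 := key t htM
    have h2 := key u huM
    rw [← cosChar_eq_cos n j 1 t (by simpa using ht)] at h1
    rw [← cosChar_eq_cos n j k u hu] at h2
    have hle : ∀ x, cosChar n j x ≤ 1 := by
      intro x
      rw [cosChar_eq_cos n j x (j * x).val (by simp)]
      exact Real.cos_le_one _
    have := gap_le n k hn hk1 hk2 (by omega) (by omega) hH lam hmono hcount j hj 1 1 3 2
      ((1 - cosChar n j 1) + (1 - cosChar n j k)) (by simp [hkn]) one_pos one_pos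
      (by norm_num) (by norm_num) (by linarith [hle 1, hle k]) (by linarith)
    have e : 4 * Real.pi / M = 2 * Real.pi / M + 2 * Real.pi / M := by ring
    rw [e]
    linarith
end

section
/- There exists a constant c > 0 such that for all sufficiently large integers N, the number A(N) of equivalence classes of pairs (n,k) with 3 ≤ n ≤ N and 1 ≤ k ≤ n/2, where (n,k) and (n',k') are equivalent when the generalised Petersen graphs P(n,k) and P(n',k') are isomorphic as simple graphs, satisfies A(N) ≥ c·N². -/
/-!
The bound comes from an explicit family of `≫ N²` pairwise non-isomorphic graphs: the `P(n,k)` with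
`n`, `k` even, `9 ≤ k` and `9k ≤ n`. Coprimality, and hence the totient function, is not needed.

For `9 ≤ k` and `9k ≤ n` a relation `α + βk = 0` in `ZMod n` with `|α|, |β| ≤ 8` forces `α = β = 0`
(`small_relation`), so closed walks of length at most `8` in `P(n,k)` are those of its cover with
base `ℤ × ℤ`. Consequently an edge `uv` is a spoke if and only if every path `x u v y` extends to a
non-backtracking closed walk of length `8` (`spokeLike_iff`): the path through a spoke closes up
around a unit square of the cover, whereas three consecutive outer (or inner) edges do not.
This characterisation is isomorphism invariant, so isomorphisms between members of the family
preserve spokes and map the outer cycle into the outer rim or into the inner rim.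

In the second case consecutive images differ by `±l` with `l` and `n` even, so they all have the
same parity and cannot exhaust the inner rim. In the first case the isomorphism is
`i ↦ c ± i` on the outer rim, and the edge `b_0 b_k` shows `k = ±l` in `ZMod n`, whence `k = l`.
The number of vertices determines `n`.
-/

open scoped Classical

/-- Pairs `(n, k)` with `3 ≤ n ≤ N` and `1 ≤ k ≤ n / 2`. -/
def gpPairs (N : ℕ) : Finset (ℕ × ℕ) :=
  (Finset.range (N + 1) ×ˢ Finset.range (N + 1)).filter
    fun p => 3 ≤ p.1 ∧ 1 ≤ p.2 ∧ 2 * p.2 ≤ p.1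

/-- Two pairs `(n, k)` and `(n', k')` are equivalent when the generalised
Petersen graphs `P(n,k)` and `P(n',k')` are isomorphic as simple graphs. -/
def petersenSetoid : Setoid (ℕ × ℕ) where
  r p q := Nonempty (petersen p.1 p.2 ≃g petersen q.1 q.2)
  iseqv := ⟨fun _ => ⟨SimpleGraph.Iso.refl⟩,
    fun ⟨e⟩ => ⟨e.symm⟩, fun ⟨e⟩ ⟨f⟩ => ⟨e.trans f⟩⟩

/-- `A N`: the number of isomorphism classes of generalised Petersen graphs
`P(n,k)` with `3 ≤ n ≤ N` and `1 ≤ k ≤ n / 2`. -/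
noncomputable def numGP (N : ℕ) : ℕ :=
  ((gpPairs N).image (Quotient.mk petersenSetoid)).card

/-! ### Closed walks of length eight -/

/-- The path `x u v y` extends to a closed walk `x u v y p q r s` of length eight without
backtracking. -/
def HasOct {V : Type*} (G : SimpleGraph V) (x u v y : V) : Prop :=
  ∃ p q r s, G.Adj y p ∧ p ≠ v ∧ G.Adj p q ∧ q ≠ y ∧ G.Adj q r ∧ r ≠ p ∧
    G.Adj r s ∧ s ≠ q ∧ G.Adj s x ∧ x ≠ r ∧ s ≠ u

/-- Every path with middle edge `uv` extends to a non-backtracking closed walk of length eight. -/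
def SpokeLike {V : Type*} (G : SimpleGraph V) (u v : V) : Prop :=
  ∀ x y, G.Adj x u → x ≠ v → G.Adj v y → y ≠ u → HasOct G x u v y

lemma SpokeLike.map {V W : Type*} {G : SimpleGraph V} {H : SimpleGraph W} (e : G ≃g H) {u v : V}
    (h : SpokeLike G u v) : SpokeLike H (e u) (e v) := by
  intro x y hx hxv hy hyu
  obtain ⟨x, rfl⟩ := e.surjective x
  obtain ⟨y, rfl⟩ := e.surjective y
  simp only [e.map_adj_iff, ne_eq, e.injective.eq_iff] at hx hxv hy hyu
  obtain ⟨p, q, r, s, h⟩ := h x y hx hxv hy hyu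
  refine ⟨e p, e q, e r, e s, ?_⟩
  simpa only [e.map_adj_iff, ne_eq, e.injective.eq_iff] using h

/-! ### Adjacency in the generalised Petersen graph and its cover -/

/-- The step length along the rim `t`: `1` on the outer rim, `k` on the inner one. -/
def rimStep (k : ℕ) (t : Bool) : ℤ := if t then k else 1

/-- The conditions `9 ≤ k` and `9 k ≤ n`, under which `P(n,k)` has no accidental short cycles. -/
def Sparse (n k : ℕ) : Prop := 9 ≤ k ∧ 9 * k ≤ n

lemma small_relation {n k : ℕ} (h : Sparse n k) {α β : ℤ} (hα : |α| ≤ 8) (hβ : |β| ≤ 8)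
    (h0 : ((α + β * k : ℤ) : ZMod n) = 0) : α = 0 ∧ β = 0 := by
  obtain ⟨hk, hn⟩ := h
  rw [ZMod.intCast_zmod_eq_zero_iff_dvd] at h0
  rw [abs_le] at hα hβ
  have hk' : (9 : ℤ) ≤ k := by exact_mod_cast hk
  have hn' : 9 * (k : ℤ) ≤ n := by exact_mod_cast hn
  have hz : α + β * k = 0 := by
    apply Int.eq_zero_of_abs_lt_dvd h0
    rw [abs_lt]
    constructor <;> nlinarith
  have hβ0 : β = 0 := by
    rcases lt_trichotomy β 0 with h | h | h
    · nlinarith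
    · exact h
    · nlinarith
  subst hβ0
  exact ⟨by simpa using hz, rfl⟩

lemma rimStep_ne_zero {n k : ℕ} (h : Sparse n k) (t : Bool) : ((rimStep k t : ℤ) : ZMod n) ≠ 0 := by
  intro h0
  cases t
  · have := small_relation h (α := 1) (β := 0) (by norm_num) (by norm_num)
      (by simpa [rimStep] using h0)
    omega
  · have := small_relation h (α := 0) (β := 1) (by norm_num) (by norm_num)
      (by simpa [rimStep] using h0)
    omega

lemma petersen_adj {n k : ℕ} (h : Sparse n k) (v w : ZMod n × Bool) :
    (petersen n k).Adj v w ↔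
      (v.2 = w.2 ∧ (w.1 = v.1 + (rimStep k v.2 : ℤ) ∨ w.1 = v.1 - (rimStep k v.2 : ℤ))) ∨
      (v.2 ≠ w.2 ∧ w.1 = v.1) := by
  obtain ⟨i, s⟩ := v
  obtain ⟨j, t⟩ := w
  have h1 := rimStep_ne_zero h s
  cases s <;> cases t <;> simp [petersen, rimStep] at h1 ⊢ <;> grind

/-- The neighbour of `p` in the cover obtained by moving `ε` steps along the rim of `p`. A point
`(α, β, t)` of the cover stands for the vertex at `α + β k` on the rim `t`. -/
def coverStep (p : ℤ × ℤ × Bool) (ε : ℤ) : ℤ × ℤ × Bool :=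
  if p.2.2 then (p.1, p.2.1 + ε, true) else (p.1 + ε, p.2.1, false)

/-- The neighbours of a point of the cover. -/
def coverNbrs (p : ℤ × ℤ × Bool) : List (ℤ × ℤ × Bool) :=
  [(p.1, p.2.1, !p.2.2), coverStep p 1, coverStep p (-1)]

/-- The covering map, based at `i`. -/
def coverMap (n k : ℕ) (i : ZMod n) (p : ℤ × ℤ × Bool) : ZMod n × Bool :=
  (i + ((p.1 + p.2.1 * k : ℤ) : ZMod n), p.2.2)

lemma coverMap_step {n k : ℕ} (i : ZMod n) (p : ℤ × ℤ × Bool) (ε : ℤ) :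
    coverMap n k i (coverStep p ε) =
      ((coverMap n k i p).1 + ((ε * rimStep k p.2.2 : ℤ) : ZMod n), p.2.2) := by
  obtain ⟨α, β, t⟩ := p
  cases t <;> simp [coverMap, coverStep, rimStep] <;> ring

lemma lift_adj {n k : ℕ} (h : Sparse n k) {i : ZMod n} {p : ℤ × ℤ × Bool} {w : ZMod n × Bool}
    (hw : (petersen n k).Adj (coverMap n k i p) w) :
    ∃ q ∈ coverNbrs p, w = coverMap n k i q := by
  obtain ⟨j, t⟩ := w
  rcases (petersen_adj h _ _).1 hw with ⟨h1, h2 | h2⟩ | ⟨h1, h2⟩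
  · refine ⟨coverStep p 1, by simp [coverNbrs], ?_⟩
    rw [coverMap_step]
    ext1
    · simpa [coverMap] using h2
    · exact h1.symm
  · refine ⟨coverStep p (-1), by simp [coverNbrs], ?_⟩
    rw [coverMap_step]
    ext1
    · simpa [coverMap, sub_eq_add_neg] using h2
    · exact h1.symm
  · refine ⟨(p.1, p.2.1, !p.2.2), by simp [coverNbrs], ?_⟩
    ext1
    · simpa [coverMap] using h2
    · have : p.2.2 ≠ t := h1
      simp only [coverMap]
      revert this
      cases p.2.2 <;> cases t <;> simp

/-- In the cover, no non-backtracking closed walk of length eight contains three consecutive edges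
along the same rim. The bounds make the last point comparable with the start in `ZMod n`. -/
lemma cover_no_oct : ∀ t : Bool, ∀ ε ∈ [(1 : ℤ), -1],
    ∀ P ∈ coverNbrs (coverStep (0, 0, t) (2 * ε)), P ≠ coverStep (0, 0, t) ε →
    ∀ Q ∈ coverNbrs P, Q ≠ coverStep (0, 0, t) (2 * ε) →
    ∀ R ∈ coverNbrs Q, R ≠ P →
    ∀ S ∈ coverNbrs R, S ≠ Q → S ≠ (0, 0, t) →
    ∀ X ∈ coverNbrs S, R ≠ coverStep (0, 0, t) (-ε) →
      X ≠ coverStep (0, 0, t) (-ε) ∧ |X.1 - (coverStep (0, 0, t) (-ε)).1| ≤ 8 ∧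
        |X.2.1 - (coverStep (0, 0, t) (-ε)).2.1| ≤ 8 := by
  decide +kernel

lemma coverMap_inj {n k : ℕ} (h : Sparse n k) {i : ZMod n} {p q : ℤ × ℤ × Bool}
    (h1 : |p.1 - q.1| ≤ 8) (h2 : |p.2.1 - q.2.1| ≤ 8)
    (he : coverMap n k i p = coverMap n k i q) : p = q := by
  obtain ⟨α, β, t⟩ := p
  obtain ⟨γ, δ, s⟩ := q
  simp only [coverMap, Prod.mk.injEq, add_right_inj] at he h1 h2 ⊢
  have := small_relation h h1 h2 (by
    have := sub_eq_zero.2 he.1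
    push_cast at this ⊢
    linear_combination this)
  exact ⟨by omega, by omega, he.2⟩

/-! ### Spokes are characterised by closed walks of length eight -/

lemma spokeLike_of_spoke {n k : ℕ} (h : Sparse n k) {u v : ZMod n × Bool}
    (huv : (petersen n k).Adj u v) (hs : u.2 ≠ v.2) : SpokeLike (petersen n k) u v := by
  obtain ⟨i, t⟩ := u
  obtain ⟨j, t'⟩ := v
  rintro ⟨x, a⟩ ⟨y, b⟩ hx hxv hy hyu
  simp only [petersen_adj h] at huv hx hy
  simp only [ne_eq, Prod.mk.injEq, not_and] at hs hxv hyu huv hx hy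
  obtain rfl : j = i := by tauto
  obtain rfl : a = t := by
    rcases hx with h1 | h1
    · exact h1.1
    · exact absurd (by revert hs h1; cases a <;> cases t <;> cases t' <;> simp)
        (hxv h1.2.symm)
  obtain rfl : t' = b := by
    rcases hy with h1 | h1
    · exact h1.1
    · exact absurd (by revert hs h1; cases b <;> cases a <;> cases t' <;> simp)
        (hyu h1.2)
  have hx' : j = x + (rimStep k a : ℤ) ∨ j = x - (rimStep k a : ℤ) := by tauto
  have hy' : y = j + (rimStep k t' : ℤ) ∨ y = j - (rimStep k t' : ℤ) := by tauto
  have hs' : ¬ t' = a := fun h => hs h.symm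
  -- the four remaining vertices of the unit square of the cover
  refine ⟨(y, a), (y + x - j, a), (y + x - j, t'), (x, t'), ?_⟩
  simp only [petersen_adj h, ne_eq, Prod.mk.injEq, hs, hs', not_false_eq_true,
    not_true_eq_false, and_false, true_and, and_true, false_and, false_or, or_false]
  refine ⟨?_, ?_⟩
  · rcases hx' with h1 | h1
    · right; rw [h1]; ring
    · left; rw [h1]; ring
  · rcases hy' with h1 | h1
    · right; rw [h1]; ring
    · left; rw [h1]; ring

lemma not_spokeLike_of_rim {n k : ℕ} (h : Sparse n k) {u v : ZMod n × Bool}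
    (huv : (petersen n k).Adj u v) (hs : u.2 = v.2) : ¬ SpokeLike (petersen n k) u v := by
  obtain ⟨i, t⟩ := u
  obtain ⟨ε, hε, rfl⟩ : ∃ ε ∈ [(1 : ℤ), -1], v = coverMap n k i (coverStep (0, 0, t) ε) := by
    rcases (petersen_adj h _ _).1 huv with ⟨h1, h2 | h2⟩ | ⟨h1, h2⟩
    · refine ⟨1, by simp, ?_⟩
      rw [coverMap_step]
      exact Prod.ext (by simpa [coverMap] using h2) h1.symm
    · refine ⟨-1, by simp, ?_⟩
      rw [coverMap_step]
      exact Prod.ext (by simpa [coverMap, sub_eq_add_neg] using h2) h1.symm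
    · exact absurd hs h1
  have hu : (i, t) = coverMap n k i (0, 0, t) := by simp [coverMap]
  have hne : ∀ p q : ℤ × ℤ × Bool, |p.1 - q.1| ≤ 8 → |p.2.1 - q.2.1| ≤ 8 → p ≠ q →
      coverMap n k i p ≠ coverMap n k i q := fun p q h1 h2 h3 h4 => h3 (coverMap_inj h h1 h2 h4)
  intro hsp
  have hεc : ε = 1 ∨ ε = -1 := by simpa using hε
  obtain ⟨p, q, r, s, h1, hp, h2, hq, h3, hr, h4, hs', h5, hx, hsu⟩ :=
    hsp (coverMap n k i (coverStep (0, 0, t) (-ε))) (coverMap n k i (coverStep (0, 0, t) (2 * ε)))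
      (by
        rw [petersen_adj h, hu]
        left
        simp only [coverMap_step]
        rcases hεc with rfl | rfl <;> simp [coverMap])
      (by
        apply hne <;> rcases hεc with rfl | rfl <;> cases t <;> simp [coverStep])
      (by
        rw [petersen_adj h]
        left
        simp only [coverMap_step]
        rcases hεc with rfl | rfl <;> simp [coverMap] <;> [left; right] <;> ring)
      (by
        rw [hu]
        apply hne <;> rcases hεc with rfl | rfl <;> cases t <;> simp [coverStep])
  obtain ⟨P, hP, rfl⟩ := lift_adj h h1
  obtain ⟨Q, hQ, rfl⟩ := lift_adj h h2
  obtain ⟨R, hR, rfl⟩ := lift_adj h h3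
  obtain ⟨S, hS, rfl⟩ := lift_adj h h4
  obtain ⟨X, hX, hXe⟩ := lift_adj h h5
  obtain ⟨k1, k2, k3⟩ := cover_no_oct t ε hε P hP (fun e => hp (by rw [e])) Q hQ
    (fun e => hq (by rw [e])) R hR (fun e => hr (by rw [e])) S hS (fun e => hs' (by rw [e]))
    (fun e => hsu (by rw [e, hu])) X hX (fun e => hx (by rw [e]))
  exact k1 (coverMap_inj h k2 k3 hXe.symm)

lemma spokeLike_iff {n k : ℕ} (h : Sparse n k) {u v : ZMod n × Bool}
    (huv : (petersen n k).Adj u v) : SpokeLike (petersen n k) u v ↔ u.2 ≠ v.2 :=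
  ⟨fun hs he => not_spokeLike_of_rim h huv he hs, spokeLike_of_spoke h huv⟩

/-! ### Isomorphisms within the family -/

lemma iso_rim {n k l : ℕ} (hk : Sparse n k) (hl : Sparse n l) (e : petersen n k ≃g petersen n l)
    {u v : ZMod n × Bool} (huv : (petersen n k).Adj u v) :
    (e u).2 = (e v).2 ↔ u.2 = v.2 := by
  have h1 := spokeLike_iff hk huv
  have h2 := spokeLike_iff hl (e.map_adj_iff.2 huv)
  have h3 : SpokeLike (petersen n l) (e u) (e v) ↔ SpokeLike (petersen n k) u v :=
    ⟨fun h => by simpa using h.map e.symm, fun h => h.map e⟩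
  rw [h1, h2] at h3
  exact not_iff_not.1 h3

lemma eq_of_iso {n k l : ℕ} (hk : Sparse n k) (hl : Sparse n l) (hn : Even n) (hle : Even l)
    (e : petersen n k ≃g petersen n l) : k = l := by
  have hn0 : NeZero n := ⟨by have := hk.1; have := hk.2; omega⟩
  have hout : ∀ i : ZMod n, (petersen n k).Adj (i, false) (i + 1, false) := fun i => by
    rw [petersen_adj hk]; simp [rimStep]
  have hspoke : ∀ i : ZMod n, (petersen n k).Adj (i, false) (i, true) := fun i => by
    rw [petersen_adj hk]; simp
  have hconst : ∀ i : ZMod n, (e (i, false)).2 = (e (0, false)).2 := by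
    have : ∀ m : ℕ, (e ((m : ZMod n), false)).2 = (e (0, false)).2 := by
      intro m
      induction m with
      | zero => simp
      | succ m ih =>
        rw [← ih, Nat.cast_succ]
        exact ((iso_rim hk hl e (hout m)).2 rfl).symm
    intro i
    simpa using this i.val
  have hin : ∀ i : ZMod n, (e (i, false)).2 ≠ (e (i, true)).2 ∧
      (e (i, true)).1 = (e (i, false)).1 := by
    intro i
    have h1 : (e (i, false)).2 ≠ (e (i, true)).2 := fun h => by
      simpa using (iso_rim hk hl e (hspoke i)).1 h
    rcases (petersen_adj hl _ _).1 (e.map_adj_iff.2 (hspoke i)) with h2 | h2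
    · exact absurd h2.1 h1
    · exact h2
  have hstep : ∀ i : ZMod n,
      (e (i + 1, false)).1 = (e (i, false)).1 + (rimStep l (e (0, false)).2 : ℤ) ∨
      (e (i + 1, false)).1 = (e (i, false)).1 - (rimStep l (e (0, false)).2 : ℤ) := by
    intro i
    rcases (petersen_adj hl _ _).1 (e.map_adj_iff.2 (hout i)) with h2 | h2
    · rw [hconst i] at h2; exact h2.2
    · exact absurd ((hconst i).trans (hconst (i + 1)).symm) h2.1
  rcases Bool.eq_false_or_eq_true (e (0, false)).2 with hc | hc
  · -- the outer rim goes to the inner one: contradiction by parity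
    exfalso
    simp only [hc, rimStep, if_true] at hstep hconst
    let f := ZMod.castHom hn.two_dvd (ZMod 2)
    have hl0 : f ((l : ℤ) : ZMod n) = 0 := by
      rw [map_intCast]
      exact (ZMod.intCast_zmod_eq_zero_iff_dvd _ _).2 (by exact_mod_cast hle.two_dvd)
    have hpar : ∀ i : ZMod n, f (e (i, false)).1 = f (e (0, false)).1 := by
      have : ∀ m : ℕ, f (e ((m : ZMod n), false)).1 = f (e (0, false)).1 := by
        intro m
        induction m with
        | zero => simp
        | succ m ih =>
          rw [← ih, Nat.cast_succ]
          rcases hstep m with h | h <;> rw [h]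
          · rw [map_add, hl0, add_zero]
          · rw [map_sub, hl0, sub_zero]
      intro i
      simpa using this i.val
    obtain ⟨⟨i, t⟩, hw⟩ := e.surjective ((e (0, false)).1 + 1, true)
    cases t
    · have := hpar i
      rw [hw] at this
      simp at this
    · have := (hin i).1
      rw [hw, hconst i] at this
      exact this rfl
  · simp only [hc, rimStep, Bool.false_eq_true, if_false, Int.cast_one] at hstep hconst
    have h2 : (2 : ZMod n) ≠ 0 := fun h => by
      have := small_relation hk (α := 2) (β := 0) (by norm_num) (by norm_num) (by simpa using h)
      omega
    -- a change of direction along the outer rim would contradict injectivity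
    have hturn : ∀ i : ZMod n, (e (i + 1 + 1, false)).1 ≠ (e (i, false)).1 := by
      intro i h
      have h3 : e (i + 1 + 1, false) = e (i, false) :=
        Prod.ext h ((hconst _).trans (hconst _).symm)
      have h4 := congrArg Prod.fst (e.injective h3)
      apply h2
      linear_combination h4
    obtain ⟨σ, hσ, h0⟩ : ∃ σ : ZMod n, (σ = 1 ∨ σ = -1) ∧
        (e (0 + 1, false)).1 = (e (0, false)).1 + σ := by
      rcases hstep 0 with h | h
      · exact ⟨1, Or.inl rfl, h⟩
      · exact ⟨-1, Or.inr rfl, by rw [h]; ring⟩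
    have hdir : ∀ m : ℕ, (e ((m : ZMod n) + 1, false)).1 = (e ((m : ZMod n), false)).1 + σ := by
      intro m
      induction m with
      | zero => simpa using h0
      | succ m ih =>
        rw [Nat.cast_succ]
        have ht := hturn m
        rcases hσ with rfl | rfl
        · rcases hstep (m + 1) with h | h
          · exact h
          · exact absurd (by rw [h, ih]; ring) ht
        · rcases hstep (m + 1) with h | h
          · exact absurd (by rw [h, ih]; ring) ht
          · rw [h]; ring
    have hlin : ∀ m : ℕ, (e ((m : ZMod n), false)).1 = (e (0, false)).1 + m * σ := by
      intro m
      induction m with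
      | zero => simp
      | succ m ih =>
        rw [Nat.cast_succ, hdir, ih]; ring
    have hinn : ∀ i : ZMod n, (e (i, true)).2 = true := by
      intro i
      have := (hin i).1
      rw [hconst i] at this
      simpa using this.symm
    have hadj : (petersen n k).Adj (0, true) ((k : ZMod n), true) := by
      rw [petersen_adj hk]; simp [rimStep]
    have hadj' := (petersen_adj hl _ _).1 (e.map_adj_iff.2 hadj)
    rw [hinn, hinn, (hin _).2, (hin _).2, hlin] at hadj'
    simp only [rimStep, if_true, ne_eq, not_true, false_and, or_false, true_and,
      Int.cast_natCast] at hadj'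
    have hkl : (((k : ℤ) - l : ℤ) : ZMod n) = 0 ∨ (((k : ℤ) + l : ℤ) : ZMod n) = 0 := by
      push_cast
      rcases hσ with rfl | rfl <;> rcases hadj' with h | h
      · left; linear_combination h
      · right; linear_combination h
      · right; linear_combination -h
      · left; linear_combination -h
    obtain ⟨a1, a2⟩ := hk
    obtain ⟨b1, b2⟩ := hl
    simp only [ZMod.intCast_zmod_eq_zero_iff_dvd] at hkl
    rcases hkl with h | h
    · have := Int.eq_zero_of_abs_lt_dvd h (by rw [abs_lt]; constructor <;> omega)
      omega
    · have := Int.eq_zero_of_abs_lt_dvd h (by rw [abs_lt]; constructor <;> omega)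
      omega

lemma card_eq_of_iso {n k n' k' : ℕ} (e : petersen n k ≃g petersen n' k') : n = n' := by
  have := Nat.card_congr e.toEquiv
  simp only [Nat.card_prod, Nat.card_zmod, Nat.card_eq_fintype_card, Fintype.card_bool] at this
  omega

/-! ### Counting -/

/-- There is `c > 0` with `A(N) ≥ c · N²` for all sufficiently large `N`. -/
theorem numGP_ge :
    ∃ c : ℝ, 0 < c ∧ ∃ N₀ : ℕ, ∀ N : ℕ, N₀ ≤ N →
      c * (N : ℝ) ^ 2 ≤ (numGP N : ℝ) := by
  refine ⟨1 / 6400, by norm_num, 200, fun N hN => ?_⟩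
  obtain ⟨T, hT⟩ : ∃ T, T = N / 40 := ⟨_, rfl⟩
  have hT5 : 5 ≤ T := by omega
  have hTN : 40 * T ≤ N := by omega
  have hNT : N ≤ 80 * T := by omega
  -- a `T × T` box of pairs `(n, k)` of even numbers with `10 ≤ k`, `9 k ≤ n` and `n ≤ N`
  let F : ℕ × ℕ → ℕ × ℕ := fun p => (2 * (9 * T + 45 + p.1), 2 * (5 + p.2))
  have hF : ∀ p ∈ Finset.range T ×ˢ Finset.range T, Sparse (F p).1 (F p).2 ∧ F p ∈ gpPairs N := by
    rintro ⟨a, b⟩ hp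
    simp only [Finset.mem_product, Finset.mem_range] at hp
    simp only [F, Sparse, gpPairs, Finset.mem_filter, Finset.mem_product, Finset.mem_range]
    omega
  have hcard : T * T ≤ numGP N := by
    have := Finset.card_le_card_of_injOn (s := Finset.range T ×ˢ Finset.range T)
      (t := (gpPairs N).image (Quotient.mk petersenSetoid))
      (fun p => Quotient.mk petersenSetoid (F p))
      (fun p hp => Finset.mem_image_of_mem _ (hF p hp).2) (by
        intro p hp q hq hpq
        obtain ⟨e⟩ : Nonempty (petersen (F p).1 (F p).2 ≃g petersen (F q).1 (F q).2) :=
          Quotient.exact hpq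
        have hn := card_eq_of_iso e
        have hsp := (hF p hp).1
        have hsq := (hF q hq).1
        rw [← hn] at e hsq
        have hk := eq_of_iso hsp hsq (even_two_mul _) (even_two_mul _) e
        simp only [F] at hn hk
        ext <;> omega)
    simpa [numGP] using this
  have hc : ((T * T : ℕ) : ℝ) ≤ numGP N := by exact_mod_cast hcard
  have hNT' : (N : ℝ) ≤ 80 * T := by exact_mod_cast hNT
  push_cast at hc
  have hN0 : (0 : ℝ) ≤ N := Nat.cast_nonneg N
  nlinarith
end
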